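/- arXiv:2203.08767 — 4 statements merged into one kernel-verified Lean document; each statement's English description precedes it below -/
import Mathlib

section
/- Let 0 < R ≤ Q be real numbers and let A = {p ∈ ℝ² : R ≤ ‖p‖ ≤ Q} be the closed annulus in the Euclidean plane. Define H : A × [0,1] → ℝ² by H(p,t) = (((1−t)·‖p‖ + t·R)/‖p‖) · p. Then: (i) H is continuous; (ii) H(p,t) ∈ A for all p ∈ A and t ∈ [0,1]; (iii) H(p,0) = p for all p ∈ A; (iv) ‖H(p,1)‖ = R for all p ∈ A; (v) H(p,t) = p for all t ∈ [0,1] whenever ‖p‖ = R; and (vi) for every fixed t ∈ [0,1], the map p ↦ H(p,t) is 1-Lipschitz on A, i.e. ‖H(p,t) − H(q,t)‖ ≤ ‖p − q‖ for all p, q ∈ A. In other words, the inner circle of radius R is a Lipschitz deformation retract of the annulus A. -/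
open Set

/-!
Write `u = p / ‖p‖` and `v = q / ‖q‖`. For unit vectors,
`‖a u - b v‖² = (a - b)² + a b ‖u - v‖²`, so the distance between two points on fixed rays can
only decrease when their radii decrease and so does the difference of the radii. The homotopy
moves the radius `ρ` to `(1 - t) ρ + t R`, which does both as long as `R ≤ ρ`.
-/

open NormedSpace (norm_normalize norm_smul_normalize)

/-- The closed annulus in `E` centred at `0` with radii `R` and `Q` (a spherical shell in higher
dimension). -/
def closedAnnulus (E : Type*) [NormedAddCommGroup E] (R Q : ℝ) : Set E :=
  {p | R ≤ ‖p‖ ∧ ‖p‖ ≤ Q}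

theorem ne_zero_of_mem_closedAnnulus {E : Type*} [NormedAddCommGroup E] {R Q : ℝ} {p : E}
    (hR : 0 < R) (hp : p ∈ closedAnnulus E R Q) : p ≠ 0 :=
  norm_pos_iff.1 (hR.trans_le hp.1)

section NormedSpace

variable {E : Type*} [NormedAddCommGroup E] [NormedSpace ℝ E] {R t : ℝ} {p : E}

/-- The radial homotopy from the identity to the radial projection onto the sphere of radius `R`
centred at `0`. It is defined for all real times `t` and takes the value `0` at the origin. -/
noncomputable def radialHomotopy (R : ℝ) (p : E) (t : ℝ) : E :=
  (((1 - t) * ‖p‖ + t * R) / ‖p‖) • p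

theorem radialHomotopy_eq_smul_normalize (R : ℝ) (p : E) (t : ℝ) :
    radialHomotopy R p t = ((1 - t) * ‖p‖ + t * R) • NormedSpace.normalize p := by
  rw [radialHomotopy, NormedSpace.normalize, smul_smul, div_eq_mul_inv]

theorem radialHomotopy_zero (R : ℝ) (p : E) : radialHomotopy R p 0 = p := by
  simp [radialHomotopy_eq_smul_normalize]

theorem radialHomotopy_norm_self (p : E) (t : ℝ) : radialHomotopy ‖p‖ p t = p := by
  rw [radialHomotopy_eq_smul_normalize, ← add_mul, sub_add_cancel, one_mul, norm_smul_normalize]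

theorem norm_radialHomotopy (hR : 0 ≤ R) (hp : p ≠ 0) (ht : t ∈ Icc (0 : ℝ) 1) :
    ‖radialHomotopy R p t‖ = (1 - t) * ‖p‖ + t * R := by
  have hradius : 0 ≤ (1 - t) * ‖p‖ + t * R :=
    add_nonneg (mul_nonneg (sub_nonneg.2 ht.2) (norm_nonneg p)) (mul_nonneg ht.1 hR)
  rw [radialHomotopy_eq_smul_normalize, norm_smul, norm_normalize hp, mul_one,
    Real.norm_of_nonneg hradius]

theorem continuousOn_radialHomotopy (R : ℝ) :
    ContinuousOn (fun x : E × ℝ => radialHomotopy R x.1 x.2) ({0}ᶜ ×ˢ univ) := by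
  have hnorm : ∀ x ∈ ({0}ᶜ ×ˢ univ : Set (E × ℝ)), ‖x.1‖ ≠ 0 := fun x hx => norm_ne_zero_iff.2 hx.1
  unfold radialHomotopy
  fun_prop (disch := assumption)

theorem radialHomotopy_mem_closedAnnulus {Q : ℝ} (hR : 0 < R) (hp : p ∈ closedAnnulus E R Q)
    (ht : t ∈ Icc (0 : ℝ) 1) : radialHomotopy R p t ∈ closedAnnulus E R Q := by
  have hradius : (1 - t) * ‖p‖ + t * R ∈ Icc R Q :=
    convex_Icc R Q hp (left_mem_Icc.2 (hp.1.trans hp.2)) (sub_nonneg.2 ht.2) ht.1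
      (sub_add_cancel 1 t)
  rwa [← norm_radialHomotopy hR.le (ne_zero_of_mem_closedAnnulus hR hp) ht] at hradius

end NormedSpace

section InnerProductSpace

variable {E : Type*} [NormedAddCommGroup E] [InnerProductSpace ℝ E]

theorem norm_smul_sub_smul_sq_of_norm_eq {u v : E} (huv : ‖u‖ = ‖v‖) (a b : ℝ) :
    ‖a • u - b • v‖ ^ 2 = (a - b) ^ 2 * ‖u‖ ^ 2 + a * b * ‖u - v‖ ^ 2 := by
  simp only [norm_sub_sq_real, norm_smul, inner_smul_left, inner_smul_right, mul_pow,
    Real.norm_eq_abs, sq_abs, conj_trivial, ← huv]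
  ring

theorem norm_smul_sub_smul_le_of_norm_eq {u v : E} (huv : ‖u‖ = ‖v‖) {a b a' b' : ℝ}
    (ha : 0 ≤ a) (haa' : a ≤ a') (hb : 0 ≤ b) (hbb' : b ≤ b') (hab : |a - b| ≤ |a' - b'|) :
    ‖a • u - b • v‖ ≤ ‖a' • u - b' • v‖ := by
  have hsq : (a - b) ^ 2 ≤ (a' - b') ^ 2 := sq_le_sq.2 hab
  have hmul : a * b ≤ a' * b' := mul_le_mul haa' hbb' hb (ha.trans haa')
  rw [← sq_le_sq₀ (norm_nonneg _) (norm_nonneg _), norm_smul_sub_smul_sq_of_norm_eq huv,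
    norm_smul_sub_smul_sq_of_norm_eq huv]
  gcongr

theorem norm_radialHomotopy_sub_radialHomotopy_le {R t : ℝ} {p q : E} (hR : 0 < R)
    (hp : R ≤ ‖p‖) (hq : R ≤ ‖q‖) (ht : t ∈ Icc (0 : ℝ) 1) :
    ‖radialHomotopy R p t - radialHomotopy R q t‖ ≤ ‖p - q‖ := by
  have hne {x : E} (hx : R ≤ ‖x‖) : x ≠ 0 := norm_pos_iff.1 (hR.trans_le hx)
  have hnorm : ‖NormedSpace.normalize p‖ = ‖NormedSpace.normalize q‖ := by
    rw [norm_normalize (hne hp), norm_normalize (hne hq)]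
  have hradius_nonneg {x : E} (hx : R ≤ ‖x‖) : 0 ≤ (1 - t) * ‖x‖ + t * R :=
    norm_radialHomotopy hR.le (hne hx) ht ▸ norm_nonneg _
  have hradius_le {x : E} (hx : R ≤ ‖x‖) : (1 - t) * ‖x‖ + t * R ≤ ‖x‖ := by
    linarith [mul_le_mul_of_nonneg_left hx ht.1]
  have hradius_sub : |((1 - t) * ‖p‖ + t * R) - ((1 - t) * ‖q‖ + t * R)| ≤ |‖p‖ - ‖q‖| := by
    rw [add_sub_add_right_eq_sub, ← mul_sub, abs_mul, abs_of_nonneg (sub_nonneg.2 ht.2)]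
    exact mul_le_of_le_one_left (abs_nonneg _) (sub_le_self 1 ht.1)
  simpa only [radialHomotopy_eq_smul_normalize, norm_smul_normalize] using
    norm_smul_sub_smul_le_of_norm_eq hnorm (hradius_nonneg hp) (hradius_le hp)
      (hradius_nonneg hq) (hradius_le hq) hradius_sub

theorem annulus_lipschitz_deformation_retract_general {R : ℝ} (hR : 0 < R) (Q : ℝ) :
    ContinuousOn (fun x : E × ℝ => radialHomotopy R x.1 x.2) (closedAnnulus E R Q ×ˢ Icc 0 1) ∧
    (∀ p ∈ closedAnnulus E R Q, ∀ t ∈ Icc (0 : ℝ) 1,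
      radialHomotopy R p t ∈ closedAnnulus E R Q) ∧
    (∀ p ∈ closedAnnulus E R Q, radialHomotopy R p 0 = p) ∧
    (∀ p ∈ closedAnnulus E R Q, ‖radialHomotopy R p 1‖ = R) ∧
    (∀ p ∈ closedAnnulus E R Q, ‖p‖ = R → ∀ t ∈ Icc (0 : ℝ) 1, radialHomotopy R p t = p) ∧
    (∀ t ∈ Icc (0 : ℝ) 1, ∀ p ∈ closedAnnulus E R Q, ∀ q ∈ closedAnnulus E R Q,
      ‖radialHomotopy R p t - radialHomotopy R q t‖ ≤ ‖p - q‖) := by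
  have hne {p : E} (hp : p ∈ closedAnnulus E R Q) : p ≠ 0 := ne_zero_of_mem_closedAnnulus hR hp
  refine ⟨?_, ?_, ?_, ?_, ?_, ?_⟩
  · exact (continuousOn_radialHomotopy R).mono (prod_mono (fun _ => hne) (subset_univ _))
  · exact fun p hp t ht => radialHomotopy_mem_closedAnnulus hR hp ht
  · exact fun p _ => radialHomotopy_zero R p
  · intro p hp
    simpa using norm_radialHomotopy hR.le (hne hp) (right_mem_Icc.2 zero_le_one)
  · rintro p - rfl t -
    exact radialHomotopy_norm_self p t
  · exact fun t ht p hp q hq => norm_radialHomotopy_sub_radialHomotopy_le hR hp.1 hq.1 ht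

end InnerProductSpace

/-- The inner circle of radius `R` is a Lipschitz deformation retract of the
closed annulus `A = {p : ℝ² | R ≤ ‖p‖ ≤ Q}`, via the radial homotopy
`H (p, t) = (((1 - t) * ‖p‖ + t * R) / ‖p‖) • p`. -/
theorem annulus_lipschitz_deformation_retract
    (R Q : ℝ) (hR : 0 < R) (hRQ : R ≤ Q)
    (A : Set (EuclideanSpace ℝ (Fin 2)))
    (hA : A = {p : EuclideanSpace ℝ (Fin 2) | R ≤ ‖p‖ ∧ ‖p‖ ≤ Q})
    (H : EuclideanSpace ℝ (Fin 2) → ℝ → EuclideanSpace ℝ (Fin 2))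
    (hH : ∀ p t, H p t = (((1 - t) * ‖p‖ + t * R) / ‖p‖) • p) :
    -- (i) H is continuous (on A × [0,1])
    ContinuousOn (fun q : EuclideanSpace ℝ (Fin 2) × ℝ => H q.1 q.2) (A ×ˢ Icc 0 1) ∧
    -- (ii) H maps into A
    (∀ p ∈ A, ∀ t ∈ Icc (0:ℝ) 1, H p t ∈ A) ∧
    -- (iii) H(p,0) = p
    (∀ p ∈ A, H p 0 = p) ∧
    -- (iv) ‖H(p,1)‖ = R
    (∀ p ∈ A, ‖H p 1‖ = R) ∧
    -- (v) H is relative to the inner circle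
    (∀ p ∈ A, ‖p‖ = R → ∀ t ∈ Icc (0:ℝ) 1, H p t = p) ∧
    -- (vi) each time slice is 1-Lipschitz on A
    (∀ t ∈ Icc (0:ℝ) 1, ∀ p ∈ A, ∀ q ∈ A, ‖H p t - H q t‖ ≤ ‖p - q‖) := by
  obtain rfl : H = radialHomotopy R := funext₂ hH
  exact hA ▸ annulus_lipschitz_deformation_retract_general hR Q
end

section
/- Fix R > 0 and s > 0, and define α : (0,∞) → ℝ by α(c) = vol(B(O,R) ∩ B(p_c,s)) and y : (0,∞) → ℝ by letting y(c) be the maximum of the second coordinates of points of C(O,R) ∩ C(p_c,s) if this intersection is nonempty, and y(c) = 0 otherwise. Then α is continuously differentiable on (0,∞): for every c > 0, α has derivative −2·y(c) at c, and y is continuous on (0,∞). -/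
open Set MeasureTheory Metric
open scoped Classical

/-- The point `(c, 0)` in the Euclidean plane. -/
noncomputable def pc (c : ℝ) : EuclideanSpace ℝ (Fin 2) :=
  (WithLp.equiv 2 (Fin 2 → ℝ)).symm ![c, 0]

/-!
By Cavalieri's principle, `α c` is the integral over the heights `t` of the length of the overlap of
the chords `(-a, a)` and `(c - b, c + b)` cut out of the two discs, where `a = √(R² - t²)` and
`b = √(s² - t²)`. As `c` increases, the overlap is constant when the chords are nested or disjoint,
and shrinks at unit speed when they overlap properly, that is, when `a`, `b` and `c` are the sides
of a nondegenerate triangle. By Heron's formula the latter happens exactly when `|t| < y c`, so that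
differentiation under the integral sign gives `α' c = -∫_{|t| < y c} 1 = -2 * y c`.
-/

namespace TwoDiscs

variable {R s a b c t : ℝ}

-- For `q < 0` both sides take their junk value `0`.
lemma sSup_setOf_sq_eq (q : ℝ) : sSup {v : ℝ | v ^ 2 = q} = √q := by
  rcases lt_or_ge q 0 with hq | hq
  · have hempty : {v : ℝ | v ^ 2 = q} = ∅ :=
      eq_empty_of_forall_notMem fun v hv => (sq_nonneg v).not_gt (hv.trans_lt hq)
    rw [hempty, Real.sSup_empty, Real.sqrt_eq_zero_of_nonpos hq.le]
  · exact IsGreatest.csSup_eq ⟨Real.sq_sqrt hq, fun v hv => Real.le_sqrt_of_sq_le hv.le⟩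

lemma ite_nonempty_sSup_image {β : Type*} (f : β → ℝ) (S : Set β) [Decidable S.Nonempty] :
    (if S.Nonempty then sSup (f '' S) else 0) = sSup (f '' S) := by
  split_ifs with h
  · rfl
  · rw [not_nonempty_iff_eq_empty.1 h, image_empty, Real.sSup_empty]

lemma ae_sq_ne (q : ℝ) : ∀ᵐ t : ℝ, t ^ 2 ≠ q := by
  filter_upwards [(toFinite {√q, -√q}).countable.ae_notMem volume] with t ht hq
  exact ht (abs_eq (Real.sqrt_nonneg q) |>.1 (by rw [← hq, Real.sqrt_sq_eq_abs]))

lemma volume_real_eq_integral_slices {S : Set (EuclideanSpace ℝ (Fin 2))} (hS : MeasurableSet S)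
    (hfin : volume S ≠ ⊤) : volume.real S = ∫ t, volume.real {x : ℝ | !₂[x, t] ∈ S} := by
  have hpres : MeasurePreserving fun z : ℝ × ℝ => !₂[z.1, z.2] :=
    (PiLp.volume_preserving_toLp (Fin 2)).comp (volume_preserving_finTwoArrow ℝ).symm
  have hS' := hpres.measurable hS
  have hvol : volume S = ∫⁻ t, volume {x : ℝ | !₂[x, t] ∈ S} := by
    rw [← hpres.measure_preimage hS.nullMeasurableSet, Measure.volume_eq_prod,
      Measure.prod_apply_symm hS']
    rfl
  have hmeas : Measurable fun t => volume {x : ℝ | !₂[x, t] ∈ S} :=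
    measurable_measure_prodMk_right hS'
  exact (congrArg ENNReal.toReal hvol).trans
    (integral_toReal hmeas.aemeasurable (ae_lt_top hmeas (hvol ▸ hfin))).symm

/-- The square of the second coordinate of the common points of the circles of radii `R` and `s`
about `(0, 0)` and `(c, 0)`, whose first coordinate is `(c² + R² - s²) / (2c)`. It is negative when
the circles do not meet, and meaningless for `c = 0`. -/
noncomputable def heightSq (R s c : ℝ) : ℝ :=
  R ^ 2 - ((c ^ 2 + R ^ 2 - s ^ 2) / (2 * c)) ^ 2

/-- **Heron's formula**: both sides are `16` times the squared area of the triangle with sides `R`,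
`s` and `c`. -/
lemma four_mul_sq_mul_heightSq (hc : c ≠ 0) :
    4 * c ^ 2 * heightSq R s c = ((R + s) ^ 2 - c ^ 2) * (c ^ 2 - (R - s) ^ 2) := by
  rw [heightSq]
  field_simp
  ring

lemma heightSq_comm (hc : c ≠ 0) : heightSq R s c = heightSq s R c := by
  rw [heightSq, heightSq]
  field_simp
  ring

lemma heightSq_le_sq_left (R s c : ℝ) : heightSq R s c ≤ R ^ 2 :=
  sub_le_self _ (sq_nonneg _)

lemma heightSq_le_sq_right (hc : c ≠ 0) : heightSq R s c ≤ s ^ 2 :=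
  heightSq_comm hc ▸ heightSq_le_sq_left s R c

lemma heightSq_sqrt_sq_sub_sq (hR : t ^ 2 ≤ R ^ 2) (hs : t ^ 2 ≤ s ^ 2) :
    heightSq √(R ^ 2 - t ^ 2) √(s ^ 2 - t ^ 2) c = heightSq R s c - t ^ 2 := by
  rw [heightSq, heightSq, Real.sq_sqrt (sub_nonneg.2 hR), Real.sq_sqrt (sub_nonneg.2 hs)]
  ring

lemma triangle_of_heightSq_pos (ha : 0 ≤ a) (hb : 0 ≤ b) (hc : 0 < c) (h : 0 < heightSq a b c) :
    |a - b| < c ∧ c < a + b := by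
  have heron : 0 < ((a + b) ^ 2 - c ^ 2) * (c ^ 2 - (a - b) ^ 2) := by
    rw [← four_mul_sq_mul_heightSq hc.ne']
    positivity
  have hab : (a - b) ^ 2 ≤ (a + b) ^ 2 := by nlinarith [mul_nonneg ha hb]
  obtain ⟨h₁, h₂⟩ | ⟨h₁, h₂⟩ := mul_pos_iff.1 heron
  · exact ⟨abs_lt_of_sq_lt_sq (sub_pos.1 h₂) hc.le,
      lt_of_pow_lt_pow_left₀ 2 (by positivity) (sub_pos.1 h₁)⟩
  · linarith

lemma not_triangle_of_heightSq_neg (hc : 0 < c) (h : heightSq a b c < 0) :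
    c < |a - b| ∨ a + b < c := by
  have heron : ((a + b) ^ 2 - c ^ 2) * (c ^ 2 - (a - b) ^ 2) < 0 := by
    rw [← four_mul_sq_mul_heightSq hc.ne']
    exact mul_neg_of_pos_of_neg (by positivity) h
  obtain ⟨-, h₂⟩ | ⟨h₁, -⟩ := mul_neg_iff.1 heron
  · exact .inl (abs_of_pos hc ▸ sq_lt_sq.1 (sub_neg.1 h₂))
  · exact .inr (lt_of_pow_lt_pow_left₀ 2 hc.le (sub_neg.1 h₁))

lemma continuousOn_heightSq (R s : ℝ) : ContinuousOn (heightSq R s) {0}ᶜ := by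
  unfold heightSq
  refine continuousOn_const.sub (.pow (.div (by fun_prop) (by fun_prop) fun c hc => ?_) 2)
  exact mul_ne_zero two_ne_zero hc

lemma pc_zero : pc 0 = 0 := by
  ext i
  fin_cases i <;> simp [pc]

lemma dist_pc_sq (p : EuclideanSpace ℝ (Fin 2)) (c : ℝ) :
    dist p (pc c) ^ 2 = (p 0 - c) ^ 2 + p 1 ^ 2 := by
  simp [EuclideanSpace.dist_sq_eq, Real.dist_eq, Fin.sum_univ_two, pc]

lemma mem_sphere_pc_iff (hs : 0 ≤ s) {p : EuclideanSpace ℝ (Fin 2)} :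
    p ∈ sphere (pc c) s ↔ (p 0 - c) ^ 2 + p 1 ^ 2 = s ^ 2 := by
  rw [mem_sphere, ← sq_eq_sq₀ dist_nonneg hs, dist_pc_sq]

lemma mem_ball_pc_iff (hs : 0 ≤ s) {p : EuclideanSpace ℝ (Fin 2)} :
    p ∈ ball (pc c) s ↔ p 0 ∈ ball c √(s ^ 2 - p 1 ^ 2) := by
  rw [mem_ball, mem_ball, ← sq_lt_sq₀ dist_nonneg hs, dist_pc_sq, Real.lt_sqrt dist_nonneg,
    Real.dist_eq, sq_abs, lt_sub_iff_add_lt]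

lemma mem_sphere_inter_sphere_iff (hR : 0 ≤ R) (hs : 0 ≤ s) (hc : c ≠ 0)
    {p : EuclideanSpace ℝ (Fin 2)} :
    p ∈ sphere 0 R ∩ sphere (pc c) s ↔
      p 0 = (c ^ 2 + R ^ 2 - s ^ 2) / (2 * c) ∧ p 1 ^ 2 = heightSq R s c := by
  rw [mem_inter_iff, ← pc_zero, mem_sphere_pc_iff hR, mem_sphere_pc_iff hs, heightSq, sub_zero,
    eq_div_iff (mul_ne_zero two_ne_zero hc)]
  constructor
  · rintro ⟨h₁, h₂⟩
    have h : p 0 * (2 * c) = c ^ 2 + R ^ 2 - s ^ 2 := by linear_combination h₁ - h₂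
    refine ⟨h, ?_⟩
    rw [← h, mul_div_cancel_right₀ _ (mul_ne_zero two_ne_zero hc)]
    linarith
  · rintro ⟨h₁, h₂⟩
    rw [← h₁, mul_div_cancel_right₀ _ (mul_ne_zero two_ne_zero hc)] at h₂
    constructor <;> linarith

lemma image_snd_sphere_inter_sphere (hR : 0 ≤ R) (hs : 0 ≤ s) (hc : c ≠ 0) :
    (fun p : EuclideanSpace ℝ (Fin 2) => p 1) '' (sphere 0 R ∩ sphere (pc c) s) =
      {v | v ^ 2 = heightSq R s c} := by
  ext v
  simp only [mem_image, mem_sphere_inter_sphere_iff hR hs hc, mem_ofPred_eq]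
  constructor
  · rintro ⟨p, ⟨-, hp⟩, rfl⟩
    exact hp
  · intro hv
    exact ⟨!₂[(c ^ 2 + R ^ 2 - s ^ 2) / (2 * c), v], by simpa using hv, by simp⟩

/-- The length of the intersection of the intervals `(-a, a)` and `(c - b, c + b)`. -/
noncomputable def overlap (a b c : ℝ) : ℝ :=
  volume.real (ball 0 a ∩ ball c b)

lemma overlap_eq_max (a b c : ℝ) :
    overlap a b c = max (min a (c + b) - max (-a) (c - b)) 0 := by
  rw [overlap, Real.ball_eq_Ioo, Real.ball_eq_Ioo, Ioo_inter_Ioo, Real.volume_real_Ioo, zero_add,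
    zero_sub]

lemma overlap_of_nonpos_left (ha : a ≤ 0) (b c : ℝ) : overlap a b c = 0 := by
  rw [overlap, ball_eq_empty.2 ha, empty_inter, measureReal_empty]

lemma overlap_of_nonpos_right (hb : b ≤ 0) (a c : ℝ) : overlap a b c = 0 := by
  rw [overlap, ball_eq_empty.2 hb, inter_empty, measureReal_empty]

lemma overlap_of_nonneg (hc : 0 ≤ c) (a b : ℝ) :
    overlap a b c = max (min (a + b - c) (2 * min a b)) 0 := by
  rw [overlap_eq_max]
  grind

lemma lipschitzWith_overlap (a b : ℝ) : LipschitzWith 2 (overlap a b) := by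
  have hright : LipschitzWith 1 fun c : ℝ => min a (c + b) :=
    (isometry_add_right b).lipschitz.const_min a
  have hleft : LipschitzWith 1 fun c : ℝ => max (-a) (c - b) :=
    (IsometryEquiv.subRight b).isometry.lipschitz.const_max (-a)
  simpa only [funext (overlap_eq_max a b), one_add_one_eq_two] using
    (hright.sub hleft).max_const 0

lemma hasDerivAt_overlap_of_triangle (h : |a - b| < c) (h' : c < a + b) :
    HasDerivAt (overlap a b) (-1) c := by
  have hlocal : overlap a b =ᶠ[nhds c] fun d => a + b - d := by
    filter_upwards [lt_mem_nhds h, gt_mem_nhds h'] with d hd hd'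
    rw [overlap_of_nonneg ((abs_nonneg _).trans hd.le)]
    grind
  exact ((hasDerivAt_id c).const_sub (a + b)).congr_of_eventuallyEq hlocal

lemma hasDerivAt_overlap_of_not_triangle (hc : 0 < c) (h : c < |a - b| ∨ a + b < c) :
    HasDerivAt (overlap a b) 0 c := by
  obtain ⟨k, hk⟩ : ∃ k : ℝ, overlap a b =ᶠ[nhds c] fun _ => k := by
    rcases h with hnested | hdisjoint
    · refine ⟨max (2 * min a b) 0, ?_⟩
      filter_upwards [lt_mem_nhds hc, gt_mem_nhds hnested] with d hd hd'
      rw [overlap_of_nonneg hd.le]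
      grind
    · refine ⟨0, ?_⟩
      filter_upwards [lt_mem_nhds hc, lt_mem_nhds hdisjoint] with d hd hd'
      rw [overlap_of_nonneg hd.le]
      grind
  exact (hasDerivAt_const c k).congr_of_eventuallyEq hk

/-- The length of the slice at height `t` of the intersection of the discs of radii `R` and `s`
about `(0, 0)` and `(c, 0)`. -/
noncomputable def sliceLength (R s t c : ℝ) : ℝ :=
  overlap √(R ^ 2 - t ^ 2) √(s ^ 2 - t ^ 2) c

lemma sliceLength_of_sq_le_left (h : R ^ 2 ≤ t ^ 2) (s c : ℝ) : sliceLength R s t c = 0 :=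
  overlap_of_nonpos_left (Real.sqrt_eq_zero_of_nonpos (sub_nonpos.2 h)).le _ _

lemma sliceLength_of_sq_le_right (h : s ^ 2 ≤ t ^ 2) (R c : ℝ) : sliceLength R s t c = 0 :=
  overlap_of_nonpos_right (Real.sqrt_eq_zero_of_nonpos (sub_nonpos.2 h)).le _ _

lemma sliceLength_of_notMem_ball (h : t ∉ ball 0 |R|) (s c : ℝ) : sliceLength R s t c = 0 := by
  refine sliceLength_of_sq_le_left (sq_le_sq.2 ?_) s c
  simpa using h

lemma continuous_sliceLength (R s c : ℝ) : Continuous fun t => sliceLength R s t c := by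
  simp only [sliceLength, overlap_eq_max]
  fun_prop

lemma integrable_sliceLength (R s c : ℝ) : Integrable fun t => sliceLength R s t c :=
  (continuous_sliceLength R s c).integrable_of_hasCompactSupport <|
    .intro (isCompact_closedBall 0 |R|) fun _ ht =>
      sliceLength_of_notMem_ball (notMem_subset ball_subset_closedBall ht) s c

lemma lipschitzWith_sliceLength (R s t : ℝ) : LipschitzWith 2 (sliceLength R s t) :=
  lipschitzWith_overlap _ _

lemma hasDerivAt_sliceLength (hc : 0 < c) (ht : t ^ 2 ≠ heightSq R s c) :
    HasDerivAt (sliceLength R s t) ((ball 0 √(heightSq R s c)).indicator (fun _ => -1) t) c := by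
  have hmem : t ∈ ball 0 √(heightSq R s c) ↔ t ^ 2 < heightSq R s c := by
    rw [mem_ball_zero_iff, Real.lt_sqrt (norm_nonneg t), Real.norm_eq_abs, sq_abs]
  rcases le_or_gt (R ^ 2) (t ^ 2) with hR | hR
  · rw [indicator_of_notMem (hmem.not.2 ((heightSq_le_sq_left R s c).trans hR).not_gt),
      funext (sliceLength_of_sq_le_left hR s)]
    exact hasDerivAt_const c 0
  rcases le_or_gt (s ^ 2) (t ^ 2) with hs | hs
  · rw [indicator_of_notMem (hmem.not.2 ((heightSq_le_sq_right hc.ne').trans hs).not_gt),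
      funext (sliceLength_of_sq_le_right hs R)]
    exact hasDerivAt_const c 0
  have hheight := heightSq_sqrt_sq_sub_sq (c := c) hR.le hs.le
  rcases ht.lt_or_gt with hlt | hgt
  · rw [indicator_of_mem (hmem.2 hlt)]
    obtain ⟨h, h'⟩ := triangle_of_heightSq_pos (Real.sqrt_nonneg _) (Real.sqrt_nonneg _) hc
      (hheight ▸ sub_pos.2 hlt)
    exact hasDerivAt_overlap_of_triangle h h'
  · rw [indicator_of_notMem (hmem.not.2 hgt.not_gt)]
    exact hasDerivAt_overlap_of_not_triangle hc <|
      not_triangle_of_heightSq_neg hc (hheight ▸ sub_neg.2 hgt)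

lemma hasDerivAt_integral_sliceLength (R s : ℝ) (hc : 0 < c) :
    HasDerivAt (fun c => ∫ t, sliceLength R s t c) (-(2 * √(heightSq R s c))) c := by
  have hlip (t : ℝ) : LipschitzOnWith (Real.nnabs ((ball 0 |R|).indicator (fun _ => 2) t))
      (sliceLength R s t) univ := by
    by_cases ht : t ∈ ball 0 |R|
    · simpa [ht] using lipschitzWith_sliceLength R s t
    · rw [funext (sliceLength_of_notMem_ball ht s)]
      exact (LipschitzWith.const' 0).lipschitzOnWith
  have hderiv : ∀ᵐ t, HasDerivAt (sliceLength R s t)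
      ((ball 0 √(heightSq R s c)).indicator (fun _ => -1) t) c :=
    (ae_sq_ne _).mono fun t ht => hasDerivAt_sliceLength hc ht
  have hintegral : ∫ t : ℝ, (ball 0 √(heightSq R s c)).indicator (fun _ => (-1 : ℝ)) t =
      -(2 * √(heightSq R s c)) := by
    rw [integral_indicator_const _ measurableSet_ball, Real.volume_real_ball (Real.sqrt_nonneg _),
      smul_eq_mul, mul_neg_one]
  rw [← hintegral]
  refine (hasDerivAt_integral_of_dominated_loc_of_lip Filter.univ_mem
    (.of_forall fun d => (continuous_sliceLength R s d).aestronglyMeasurable)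
    (integrable_sliceLength R s c) ?_ (.of_forall hlip) ?_ hderiv).2
  · exact (measurable_const.indicator measurableSet_ball).aestronglyMeasurable
  · exact (integrable_indicator_iff measurableSet_ball).2
      (integrableOn_const measure_ball_lt_top.ne)

lemma volume_real_ball_inter_ball (hR : 0 ≤ R) (hs : 0 ≤ s) (c : ℝ) :
    volume.real (ball 0 R ∩ ball (pc c) s) = ∫ t, sliceLength R s t c := by
  rw [volume_real_eq_integral_slices (measurableSet_ball.inter measurableSet_ball)
    (measure_inter_lt_top_of_left_ne_top measure_ball_lt_top.ne).ne]
  refine integral_congr_ae (.of_forall fun t => congrArg volume.real ?_)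
  ext x
  simp [← pc_zero, mem_ball_pc_iff hR, mem_ball_pc_iff hs]

end TwoDiscs

/-- With `α c = vol(B(O,R) ∩ B((c,0),s))` and `y c` the maximal second
coordinate of a point of `C(O,R) ∩ C((c,0),s)` (or `0` if the intersection is empty),
`α` is continuously differentiable on `(0,∞)` with `α' c = -2 * y c`, and `y` is continuous
on `(0,∞)`. -/
theorem alpha_hasDerivAt
    (R s : ℝ) (hR : 0 < R) (hs : 0 < s)
    (α y : ℝ → ℝ)
    (hα : ∀ c, α c =
      (volume (ball (0 : EuclideanSpace ℝ (Fin 2)) R ∩ ball (pc c) s)).toReal)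
    (hy : ∀ c, y c =
      if (sphere (0 : EuclideanSpace ℝ (Fin 2)) R ∩ sphere (pc c) s).Nonempty then
        sSup ((fun p : EuclideanSpace ℝ (Fin 2) => p 1) ''
          (sphere (0 : EuclideanSpace ℝ (Fin 2)) R ∩ sphere (pc c) s))
      else 0) :
    (∀ c, 0 < c → HasDerivAt α (-(2 * y c)) c) ∧ ContinuousOn y (Ioi 0) := by
  have hα' : α = fun c => ∫ t, TwoDiscs.sliceLength R s t c :=
    funext fun c => (hα c).trans (TwoDiscs.volume_real_ball_inter_ball hR.le hs.le c)
  have hy' : ∀ c ∈ Ioi 0, y c = √(TwoDiscs.heightSq R s c) := fun c (hc : 0 < c) => by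
    rw [hy c, TwoDiscs.ite_nonempty_sSup_image,
      TwoDiscs.image_snd_sphere_inter_sphere hR.le hs.le hc.ne', TwoDiscs.sSup_setOf_sq_eq]
  refine ⟨fun c hc => ?_, ContinuousOn.congr ?_ hy'⟩
  · rw [hα', hy' c hc]
    exact TwoDiscs.hasDerivAt_integral_sliceLength R s hc
  · exact ((TwoDiscs.continuousOn_heightSq R s).mono fun c hc => ne_of_gt hc).sqrt
end

section
/- Fix R > 0 and s > 0, and define α : (0,∞) → ℝ by α(c) = vol(B(O,R) ∩ B(p_c,s)) and y : (0,∞) → ℝ by letting y(c) be the maximum of the second coordinates of points of C(O,R) ∩ C(p_c,s) if this intersection is nonempty, and y(c) = 0 otherwise. Then for every c > 0 there exists δ₀ > 0 such that for all real δ with |δ| ≤ δ₀ (and c + δ > 0), one has |(α(c+δ) − α(c)) + 2·y(c)·δ| ≤ 2·|δ|·|y(c) − y(c+δ)|. -/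
open Set MeasureTheory Metric
open scoped Classical

/- Let `h t` be half the length of the common chord of the circles `C(O,R)` and `C((t,0),s)`. At
height `η`, write `w`, `v` for the half-widths of the two discs. The horizontal slice of the lens
`B(O,R) ∩ B((c,0),s)` is the intersection of intervals of half-widths `w`, `v` whose centres are
`c` apart, and it has the same length as the set of `t > c` for which `t, w, v` are the sides of a
nondegenerate triangle, that is, for which `|η| < h t`. By Fubini the lens has area
`∫_{t > c} 2 h t`, so `α (c + δ) - α c + 2 δ h c` is the integral of `2 (h c - h t)` from `c` to
`c + δ`. Finally `h` increases up to `t ^ 2 = |R ^ 2 - s ^ 2|` and decreases afterwards, so near any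
`c > 0` it is monotone on either side, and the integrand is at most `2 |h c - h (c + δ)|`. -/

section MonotoneIntegral

lemma abs_sub_le_abs_sub_of_monotoneOn_or_antitoneOn {ι G : Type*} [LinearOrder ι]
    [AddCommGroup G] [LinearOrder G] [IsOrderedAddMonoid G] {f : ι → G} {a b t : ι}
    (hf : MonotoneOn f (uIcc a b) ∨ AntitoneOn f (uIcc a b)) (ht : t ∈ uIcc a b) :
    |f a - f t| ≤ |f a - f b| := by
  have hft : f t ∈ uIcc (f a) (f b) := hf.elim (·.mapsTo_uIcc ht) (·.mapsTo_uIcc ht)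
  rw [abs_sub_comm, abs_sub_comm (f a)]
  exact abs_sub_left_of_mem_uIcc hft

lemma abs_mul_sub_integral_le_of_monotoneOn_or_antitoneOn {f : ℝ → ℝ} {a b : ℝ}
    (hf : MonotoneOn f (uIcc a b) ∨ AntitoneOn f (uIcc a b)) :
    |(b - a) * f a - ∫ t in a..b, f t| ≤ |b - a| * |f a - f b| := by
  have hfi : IntervalIntegrable f volume a b :=
    hf.elim MonotoneOn.intervalIntegrable AntitoneOn.intervalIntegrable
  calc |(b - a) * f a - ∫ t in a..b, f t|
      = ‖∫ t in a..b, (f a - f t)‖ := by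
        rw [intervalIntegral.integral_sub intervalIntegrable_const hfi,
          intervalIntegral.integral_const, smul_eq_mul, Real.norm_eq_abs]
    _ ≤ |f a - f b| * |b - a| := intervalIntegral.norm_integral_le_of_norm_le_const fun t ht =>
        abs_sub_le_abs_sub_of_monotoneOn_or_antitoneOn hf (uIoc_subset_uIcc ht)
    _ = |b - a| * |f a - f b| := mul_comm _ _

end MonotoneIntegral

section Coordinates

lemma dist_pc_sq (p : EuclideanSpace ℝ (Fin 2)) (c : ℝ) :
    dist p (pc c) ^ 2 = (p 0 - c) ^ 2 + p 1 ^ 2 := by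
  simp [pc, EuclideanSpace.dist_sq_eq, Real.dist_eq]

lemma pc_zero : pc 0 = 0 := by
  ext i
  fin_cases i <;> rfl

lemma mem_ball_pc {p : EuclideanSpace ℝ (Fin 2)} {c s : ℝ} (hs : 0 ≤ s) :
    p ∈ ball (pc c) s ↔ (p 0 - c) ^ 2 + p 1 ^ 2 < s ^ 2 := by
  rw [mem_ball, ← dist_pc_sq, pow_lt_pow_iff_left₀ dist_nonneg hs two_ne_zero]

lemma mem_sphere_pc {p : EuclideanSpace ℝ (Fin 2)} {c s : ℝ} (hs : 0 ≤ s) :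
    p ∈ sphere (pc c) s ↔ (p 0 - c) ^ 2 + p 1 ^ 2 = s ^ 2 := by
  rw [mem_sphere, ← dist_pc_sq, pow_left_inj₀ dist_nonneg hs two_ne_zero]

lemma volume_eq_lintegral_horizontal_slice {A : Set (EuclideanSpace ℝ (Fin 2))}
    (hA : MeasurableSet A) :
    volume A = ∫⁻ η : ℝ, volume {x : ℝ | !₂[x, η] ∈ A} := by
  have hmp : MeasurePreserving (fun z : ℝ × ℝ => !₂[z.1, z.2]) volume volume :=
    (PiLp.volume_preserving_toLp (Fin 2)).comp (volume_preserving_finTwoArrow ℝ).symm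
  rw [← hmp.measure_preimage hA.nullMeasurableSet, Measure.volume_eq_prod,
    Measure.prod_apply_symm (hmp.measurable hA)]
  rfl

lemma horizontal_slice_ball_pc {c s : ℝ} (hs : 0 ≤ s) (η : ℝ) :
    {x : ℝ | !₂[x, η] ∈ ball (pc c) s} = Ioo (c - √(s ^ 2 - η ^ 2)) (c + √(s ^ 2 - η ^ 2)) := by
  ext x
  rw [mem_ofPred_eq, mem_ball_pc hs, ← Real.ball_eq_Ioo, mem_ball, Real.dist_eq,
    Real.lt_sqrt (abs_nonneg _), sq_abs, lt_sub_iff_add_lt]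
  rfl

end Coordinates

/-- The abscissa of the radical axis of the circles `C(O,R)` and `C((t,0),s)`, the vertical line
that carries their common chord. -/
noncomputable def radicalAbscissa (R s t : ℝ) : ℝ :=
  (t ^ 2 + R ^ 2 - s ^ 2) / (2 * t)

/-- Half the length of the common chord of `C(O,R)` and `C((t,0),s)`. When the circles do not meet
the radicand is negative, and `Real.sqrt` gives the value `0`. -/
noncomputable def halfChord (R s t : ℝ) : ℝ :=
  √(R ^ 2 - radicalAbscissa R s t ^ 2)

section Chord

variable {R s t : ℝ}

lemma mem_sphere_inter_sphere_pc (hR : 0 ≤ R) (hs : 0 ≤ s) (ht : t ≠ 0)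
    {p : EuclideanSpace ℝ (Fin 2)} :
    p ∈ sphere 0 R ∩ sphere (pc t) s ↔
      p 0 = radicalAbscissa R s t ∧ p 1 ^ 2 = R ^ 2 - radicalAbscissa R s t ^ 2 := by
  rw [← pc_zero, mem_inter_iff, mem_sphere_pc hR, mem_sphere_pc hs, sub_zero]
  have hradical : p 0 = radicalAbscissa R s t ↔ p 0 * (2 * t) = t ^ 2 + R ^ 2 - s ^ 2 :=
    eq_div_iff (mul_ne_zero two_ne_zero ht)
  constructor
  · rintro ⟨hpR, hps⟩
    have hp0 : p 0 = radicalAbscissa R s t := hradical.2 (by linarith)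
    exact ⟨hp0, by rw [← hp0]; linarith⟩
  · rintro ⟨hp0, hp1⟩
    rw [← hp0] at hp1
    have := hradical.1 hp0
    constructor <;> linarith

lemma isGreatest_snd_sphere_inter_sphere_pc (hR : 0 ≤ R) (hs : 0 ≤ s) (ht : t ≠ 0)
    (hne : (sphere (0 : EuclideanSpace ℝ (Fin 2)) R ∩ sphere (pc t) s).Nonempty) :
    IsGreatest ((fun p : EuclideanSpace ℝ (Fin 2) => p 1) '' (sphere 0 R ∩ sphere (pc t) s))
      (halfChord R s t) := by
  obtain ⟨q, hq⟩ := hne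
  have hradicand : 0 ≤ R ^ 2 - radicalAbscissa R s t ^ 2 :=
    ((mem_sphere_inter_sphere_pc hR hs ht).1 hq).2 ▸ sq_nonneg (q 1)
  constructor
  · exact ⟨!₂[radicalAbscissa R s t, halfChord R s t],
      (mem_sphere_inter_sphere_pc hR hs ht).2 ⟨rfl, Real.sq_sqrt hradicand⟩, rfl⟩
  · rintro _ ⟨p, hp, rfl⟩
    exact Real.le_sqrt_of_sq_le ((mem_sphere_inter_sphere_pc hR hs ht).1 hp).2.le

lemma halfChord_eq_zero_of_not_nonempty (hR : 0 ≤ R) (hs : 0 ≤ s) (ht : t ≠ 0)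
    (hempty : ¬(sphere (0 : EuclideanSpace ℝ (Fin 2)) R ∩ sphere (pc t) s).Nonempty) :
    halfChord R s t = 0 := by
  refine Real.sqrt_eq_zero_of_nonpos (not_lt.1 fun hradicand => hempty ?_)
  exact ⟨!₂[radicalAbscissa R s t, halfChord R s t],
    (mem_sphere_inter_sphere_pc hR hs ht).2 ⟨rfl, Real.sq_sqrt hradicand.le⟩⟩

lemma ite_sSup_snd_eq_halfChord (hR : 0 ≤ R) (hs : 0 ≤ s) (ht : t ≠ 0) :
    (if (sphere (0 : EuclideanSpace ℝ (Fin 2)) R ∩ sphere (pc t) s).Nonempty then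
        sSup ((fun p : EuclideanSpace ℝ (Fin 2) => p 1) ''
          (sphere (0 : EuclideanSpace ℝ (Fin 2)) R ∩ sphere (pc t) s))
      else 0) = halfChord R s t := by
  split_ifs with hne
  · exact (isGreatest_snd_sphere_inter_sphere_pc hR hs ht hne).csSup_eq
  · exact (halfChord_eq_zero_of_not_nonempty hR hs ht hne).symm

lemma halfChord_nonneg : 0 ≤ halfChord R s t :=
  Real.sqrt_nonneg _

lemma measurable_halfChord : Measurable (halfChord R s) := by
  unfold halfChord radicalAbscissa
  fun_prop

end Chord

section Monotonicity

variable {R s x z : ℝ}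

lemma radicalAbscissa_sq_sub_sq (hx : x ≠ 0) (hz : z ≠ 0) :
    radicalAbscissa R s x ^ 2 - radicalAbscissa R s z ^ 2 =
      (z ^ 2 - x ^ 2) * (|R ^ 2 - s ^ 2| ^ 2 - x ^ 2 * z ^ 2) / (4 * x ^ 2 * z ^ 2) := by
  rw [sq_abs, radicalAbscissa, radicalAbscissa]
  field_simp
  ring

lemma monotoneOn_halfChord : MonotoneOn (halfChord R s) (Ioc 0 √|R ^ 2 - s ^ 2|) := by
  rintro x ⟨hx, -⟩ z ⟨hz, hzD⟩ hxz
  have hxz2 : x ^ 2 ≤ z ^ 2 := by gcongr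
  have hzD2 : z ^ 2 ≤ |R ^ 2 - s ^ 2| := (Real.le_sqrt hz.le (abs_nonneg _)).1 hzD
  have hprod : x ^ 2 * z ^ 2 ≤ |R ^ 2 - s ^ 2| ^ 2 := by
    rw [sq |_|]
    exact mul_le_mul (hxz2.trans hzD2) hzD2 (sq_nonneg z) (abs_nonneg _)
  refine Real.sqrt_le_sqrt (sub_le_sub_left (sub_nonneg.1 ?_) _)
  rw [radicalAbscissa_sq_sub_sq hx.ne' hz.ne']
  exact div_nonneg (mul_nonneg (sub_nonneg.2 hxz2) (sub_nonneg.2 hprod)) (by positivity)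

lemma antitoneOn_halfChord : AntitoneOn (halfChord R s) (Ioi 0 ∩ Ici √|R ^ 2 - s ^ 2|) := by
  rintro x ⟨hx, hDx⟩ z ⟨hz, -⟩ hxz
  rw [mem_Ioi] at hx hz
  have hxz2 : x ^ 2 ≤ z ^ 2 := by gcongr
  have hDx2 : |R ^ 2 - s ^ 2| ≤ x ^ 2 := (Real.sqrt_le_left hx.le).1 hDx
  have hprod : |R ^ 2 - s ^ 2| ^ 2 ≤ x ^ 2 * z ^ 2 := by
    rw [sq |_|]
    exact mul_le_mul hDx2 (hDx2.trans hxz2) (abs_nonneg _) (sq_nonneg x)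
  refine Real.sqrt_le_sqrt (sub_le_sub_left (sub_nonneg.1 ?_) _)
  rw [radicalAbscissa_sq_sub_sq hz.ne' hx.ne', mul_comm (z ^ 2)]
  exact div_nonneg (mul_nonneg_of_nonpos_of_nonpos (sub_nonpos.2 hxz2) (sub_nonpos.2 hprod))
    (by positivity)

lemma eventually_monotoneOn_or_antitoneOn_halfChord {c : ℝ} (hc : 0 < c) :
    ∀ᶠ x in nhds c,
      MonotoneOn (halfChord R s) (uIcc c x) ∨ AntitoneOn (halfChord R s) (uIcc c x) := by
  have hleft {x : ℝ} (hx : 0 < x) (hcD : c ≤ √|R ^ 2 - s ^ 2|) (hxD : x ≤ √|R ^ 2 - s ^ 2|) :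
      MonotoneOn (halfChord R s) (uIcc c x) :=
    monotoneOn_halfChord.mono (ordConnected_Ioc.uIcc_subset ⟨hc, hcD⟩ ⟨hx, hxD⟩)
  have hright {x : ℝ} (hx : 0 < x) (hcD : √|R ^ 2 - s ^ 2| ≤ c) (hxD : √|R ^ 2 - s ^ 2| ≤ x) :
      AntitoneOn (halfChord R s) (uIcc c x) :=
    antitoneOn_halfChord.mono
      ((ordConnected_Ioi.inter ordConnected_Ici).uIcc_subset ⟨hc, hcD⟩ ⟨hx, hxD⟩)
  rcases lt_trichotomy c √|R ^ 2 - s ^ 2| with hcD | hcD | hcD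
  · filter_upwards [eventually_gt_nhds hc, eventually_le_nhds hcD] with x hx hxD
    exact Or.inl (hleft hx hcD.le hxD)
  · filter_upwards [eventually_gt_nhds hc] with x hx
    exact (le_total x √|R ^ 2 - s ^ 2|).imp (hleft hx hcD.le) (hright hx hcD.ge)
  · filter_upwards [eventually_gt_nhds hc, eventually_ge_nhds hcD] with x hx hxD
    exact Or.inr (hright hx hcD.le hxD)

end Monotonicity

/-- The intersection of the open discs of radii `R` and `s` centred at the origin and at `(c,0)`. -/
def lens (R s c : ℝ) : Set (EuclideanSpace ℝ (Fin 2)) :=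
  ball 0 R ∩ ball (pc c) s

section LensArea

variable {R s c : ℝ}

lemma abs_sq_add_sq_sub_sq_lt_iff {t v w : ℝ} (ht : 0 ≤ t) (hv : 0 ≤ v) (hw : 0 ≤ w) :
    |t ^ 2 + w ^ 2 - v ^ 2| < 2 * t * w ↔ t ∈ Ioo |w - v| (w + v) := by
  have hupper : v ^ 2 < (t + w) ^ 2 ↔ v < t + w :=
    pow_lt_pow_iff_left₀ hv (by positivity) two_ne_zero
  have hlower : (t - w) ^ 2 < v ^ 2 ↔ |t - w| < v := by rw [sq_lt_sq, abs_of_nonneg hv]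
  calc |t ^ 2 + w ^ 2 - v ^ 2| < 2 * t * w
      ↔ v ^ 2 < (t + w) ^ 2 ∧ (t - w) ^ 2 < v ^ 2 := by
        rw [abs_lt]
        constructor <;> rintro ⟨h₁, h₂⟩ <;> constructor <;> linarith
    _ ↔ v < t + w ∧ |t - w| < v := by rw [hupper, hlower]
    _ ↔ t ∈ Ioo |w - v| (w + v) := by grind

lemma abs_lt_halfChord_iff {t : ℝ} (ht : 0 < t) (η : ℝ) :
    |η| < halfChord R s t ↔
      t ∈ Ioo |√(R ^ 2 - η ^ 2) - √(s ^ 2 - η ^ 2)| (√(R ^ 2 - η ^ 2) + √(s ^ 2 - η ^ 2)) := by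
  have hradical : 2 * t * radicalAbscissa R s t = t ^ 2 + R ^ 2 - s ^ 2 :=
    mul_div_cancel₀ _ (by positivity)
  have hsymm : R ^ 2 - radicalAbscissa R s t ^ 2 = s ^ 2 - (radicalAbscissa R s t - t) ^ 2 := by
    linarith
  rw [halfChord, Real.lt_sqrt (abs_nonneg _), sq_abs]
  rcases lt_or_ge (R ^ 2) (η ^ 2) with hR | hR
  · rw [Real.sqrt_eq_zero_of_nonpos (sub_nonpos.2 hR.le)]
    refine iff_of_false (by linarith [sq_nonneg (radicalAbscissa R s t)]) ?_
    grind
  rcases lt_or_ge (s ^ 2) (η ^ 2) with hs | hs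
  · rw [Real.sqrt_eq_zero_of_nonpos (sub_nonpos.2 hs.le)]
    refine iff_of_false (by linarith [hsymm, sq_nonneg (radicalAbscissa R s t - t)]) ?_
    grind
  have hw := Real.sq_sqrt (sub_nonneg.2 hR)
  have hv := Real.sq_sqrt (sub_nonneg.2 hs)
  rw [← abs_sq_add_sq_sub_sq_lt_iff ht.le (Real.sqrt_nonneg _) (Real.sqrt_nonneg _)]
  calc η ^ 2 < R ^ 2 - radicalAbscissa R s t ^ 2
      ↔ radicalAbscissa R s t ^ 2 < √(R ^ 2 - η ^ 2) ^ 2 := by rw [hw, lt_sub_comm]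
    _ ↔ |radicalAbscissa R s t| < √(R ^ 2 - η ^ 2) := by
        rw [sq_lt_sq, abs_of_nonneg (Real.sqrt_nonneg _)]
    _ ↔ |2 * t * radicalAbscissa R s t| < 2 * t * √(R ^ 2 - η ^ 2) := by
        rw [abs_mul, abs_of_pos (by positivity : 0 < 2 * t), mul_lt_mul_iff_right₀ (by positivity)]
    _ ↔ |t ^ 2 + √(R ^ 2 - η ^ 2) ^ 2 - √(s ^ 2 - η ^ 2) ^ 2| < 2 * t * √(R ^ 2 - η ^ 2) := by
        rw [hradical, hw, hv]
        ring_nf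

lemma volume_Ioo_inter_Ioo_eq_volume_Ioi_inter_Ioo (hc : 0 ≤ c) (v w : ℝ) :
    volume (Ioo (0 - w) (0 + w) ∩ Ioo (c - v) (c + v)) =
      volume (Ioi c ∩ Ioo |w - v| (w + v)) := by
  have hleft : min (0 + w) (c + v) - max (0 - w) (c - v) =
      min (w + v - c) (min (2 * w) (2 * v)) := by
    grind
  have hright : w + v - max |w - v| c = min (w + v - c) (min (2 * w) (2 * v)) := by
    grind
  rw [Ioo_inter_Ioo, inter_comm, Ioo_inter_Ioi, Real.volume_Ioo, Real.volume_Ioo, hleft, hright]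

lemma measurableSet_lens : MeasurableSet (lens R s c) :=
  measurableSet_ball.inter measurableSet_ball

lemma volume_lens_slice (hR : 0 ≤ R) (hs : 0 ≤ s) (hc : 0 ≤ c) (η : ℝ) :
    volume {x : ℝ | !₂[x, η] ∈ lens R s c} =
      volume {t : ℝ | c < t ∧ |η| < halfChord R s t} := by
  have hregion : {t : ℝ | c < t ∧ |η| < halfChord R s t} =
      Ioi c ∩ Ioo |√(R ^ 2 - η ^ 2) - √(s ^ 2 - η ^ 2)|
        (√(R ^ 2 - η ^ 2) + √(s ^ 2 - η ^ 2)) := by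
    ext t
    exact and_congr_right fun ht => abs_lt_halfChord_iff (hc.trans_lt ht) η
  rw [hregion, ← volume_Ioo_inter_Ioo_eq_volume_Ioi_inter_Ioo hc, ← horizontal_slice_ball_pc hR,
    ← horizontal_slice_ball_pc hs, pc_zero]
  rfl

lemma volume_lens_eq_lintegral_chord (hR : 0 ≤ R) (hs : 0 ≤ s) (hc : 0 ≤ c) :
    volume (lens R s c) = ∫⁻ t in Ioi c, ENNReal.ofReal (2 * halfChord R s t) := by
  have hmeas := measurableSet_regionBetween
    (measurable_halfChord (R := R) (s := s)).neg (measurable_halfChord (R := R) (s := s))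
    (measurableSet_Ioi (a := c))
  calc volume (lens R s c)
      = ∫⁻ η : ℝ, volume {t : ℝ | c < t ∧ |η| < halfChord R s t} := by
        rw [volume_eq_lintegral_horizontal_slice measurableSet_lens]
        exact lintegral_congr (volume_lens_slice hR hs hc)
    _ = (volume.prod volume) (regionBetween (-halfChord R s) (halfChord R s) (Ioi c)) := by
        rw [Measure.prod_apply_symm hmeas]
        simp only [regionBetween, abs_lt]
        rfl
    _ = ∫⁻ t in Ioi c, ENNReal.ofReal (2 * halfChord R s t) := by
        rw [volume_regionBetween_eq_lintegral measurable_halfChord.neg.aemeasurable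
          measurable_halfChord.aemeasurable measurableSet_Ioi]
        simp only [Pi.sub_apply, Pi.neg_apply, sub_neg_eq_add, two_mul]

lemma integrableOn_chord (hR : 0 ≤ R) (hs : 0 ≤ s) (hc : 0 ≤ c) :
    IntegrableOn (fun t => 2 * halfChord R s t) (Ioi c) := by
  refine ⟨(measurable_halfChord.const_mul 2).aestronglyMeasurable, ?_⟩
  rw [hasFiniteIntegral_iff_ofReal (.of_forall fun t => mul_nonneg zero_le_two halfChord_nonneg),
    ← volume_lens_eq_lintegral_chord hR hs hc]
  exact (measure_mono inter_subset_left).trans_lt measure_ball_lt_top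

lemma toReal_volume_lens_eq_integral_chord (hR : 0 ≤ R) (hs : 0 ≤ s) (hc : 0 ≤ c) :
    (volume (lens R s c)).toReal = ∫ t in Ioi c, 2 * halfChord R s t := by
  rw [volume_lens_eq_lintegral_chord hR hs hc, integral_eq_lintegral_of_nonneg_ae
    (.of_forall fun t => mul_nonneg zero_le_two halfChord_nonneg)
    (measurable_halfChord.const_mul 2).aestronglyMeasurable]

lemma toReal_volume_lens_sub_eq_integral_chord {a b : ℝ} (hR : 0 ≤ R) (hs : 0 ≤ s) (ha : 0 ≤ a)
    (hb : 0 ≤ b) :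
    (volume (lens R s b)).toReal - (volume (lens R s a)).toReal =
      -(2 * ∫ t in a..b, halfChord R s t) := by
  rw [toReal_volume_lens_eq_integral_chord hR hs hb, toReal_volume_lens_eq_integral_chord hR hs ha,
    ← intervalIntegral.integral_const_mul, ← intervalIntegral.integral_Ioi_sub_Ioi'
      (integrableOn_chord hR hs ha) (integrableOn_chord hR hs hb), neg_sub]

end LensArea

/-- With `α c = vol(B(O,R) ∩ B((c,0),s))` and `y c` the maximal second
coordinate of a point of `C(O,R) ∩ C((c,0),s)` (or `0` if the intersection is empty), for every
`c > 0` there is `δ₀ > 0` such that for all `δ` with `|δ| ≤ δ₀` and `c + δ > 0`,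
`|(α (c+δ) - α c) + 2 * y c * δ| ≤ 2 * |δ| * |y c - y (c+δ)|`. -/
theorem alpha_difference_estimate
    (R s : ℝ) (hR : 0 < R) (hs : 0 < s)
    (α y : ℝ → ℝ)
    (hα : ∀ c, α c =
      (volume (ball (0 : EuclideanSpace ℝ (Fin 2)) R ∩ ball (pc c) s)).toReal)
    (hy : ∀ c, y c =
      if (sphere (0 : EuclideanSpace ℝ (Fin 2)) R ∩ sphere (pc c) s).Nonempty then
        sSup ((fun p : EuclideanSpace ℝ (Fin 2) => p 1) ''
          (sphere (0 : EuclideanSpace ℝ (Fin 2)) R ∩ sphere (pc c) s))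
      else 0) :
    ∀ c, 0 < c → ∃ δ₀ > (0:ℝ), ∀ δ : ℝ, |δ| ≤ δ₀ → 0 < c + δ →
      |(α (c + δ) - α c) + 2 * y c * δ| ≤ 2 * |δ| * |y c - y (c + δ)| := by
  intro c hc
  have hlens (t : ℝ) : α t = (volume (lens R s t)).toReal := hα t
  have hhalf {t : ℝ} (ht : 0 < t) : y t = halfChord R s t :=
    (hy t).trans (ite_sSup_snd_eq_halfChord hR.le hs.le ht.ne')
  obtain ⟨δ₀, hδ₀, hmono⟩ := nhds_basis_closedBall.eventually_iff.1
    (eventually_monotoneOn_or_antitoneOn_halfChord (R := R) (s := s) hc)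
  refine ⟨δ₀, hδ₀, fun δ hδ hcδ => ?_⟩
  have hchord := abs_mul_sub_integral_le_of_monotoneOn_or_antitoneOn
    (hmono (show c + δ ∈ closedBall c δ₀ by simpa using hδ))
  rw [add_sub_cancel_left] at hchord
  calc |(α (c + δ) - α c) + 2 * y c * δ|
      = |2 * (δ * halfChord R s c - ∫ t in c..(c + δ), halfChord R s t)| := by
        rw [hlens, hlens, toReal_volume_lens_sub_eq_integral_chord hR.le hs.le hc.le hcδ.le,
          hhalf hc]
        ring_nf
    _ = 2 * |δ * halfChord R s c - ∫ t in c..(c + δ), halfChord R s t| := by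
        rw [abs_mul, abs_two]
    _ ≤ 2 * (|δ| * |y c - y (c + δ)|) := by
        rw [hhalf hc, hhalf hcδ]
        gcongr
    _ = 2 * |δ| * |y c - y (c + δ)| := (mul_assoc _ _ _).symm
end

section
/- Fix 0 < R < Q, and let μ₀ be the measure on the Euclidean plane with density f with respect to 2-dimensional Lebesgue measure, where f(p) = 1/(π(Q²−R²)) if R ≤ ‖p‖ ≤ Q and f(p) = 0 otherwise. For s > 0 define ν̃_s : [R,Q] → [0,1] by ν̃_s(c) = μ₀(B(p_c,s)). Then for every s > 0 there exists ω ∈ [R,Q] such that ν̃_s is non-decreasing on [R,ω] and non-increasing on [ω,Q]. -/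
open Set MeasureTheory Metric

/-!
The ball `B(c e, s)` meets the ball `B(0, r)` in a lens, and as the centre `c e` moves outwards,
`c ≥ 0`, the lens loses volume at the rate of the chord spanned by the intersection of the two
bounding spheres. On a line parallel to `e` at distance `√q` from the axis this is elementary: the
segment inside the lens shrinks, at unit speed, exactly while `c`, `√(s² - q)` and `√(r² - q)` are
the sides of a triangle. The lens at `c` therefore has the volume of the union of the chords for
distances `t > c`, the chord for `t` being placed at height `t` along the axis.

Inside the annulus the ball gains the `R`-chord and loses the `Q`-chord. The difference of their
squared radii at distance `t` has the sign of `t² - ((R² + Q²) / 2 - s²)`, so the volume grows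
up to `c = √((R² + Q²) / 2 - s²)` and shrinks from there on.
-/

open scoped RealInnerProductSpace NNReal

/-- The squared radius of the disc spanned by the intersection of two spheres of radii `s` and `r`
whose centres are at distance `t > 0`; it is not positive when the spheres do not cross. -/
noncomputable def chordRadiusSq (s r t : ℝ) : ℝ :=
  r ^ 2 - ((t ^ 2 + r ^ 2 - s ^ 2) / (2 * t)) ^ 2

lemma measurable_chordRadiusSq (s r : ℝ) : Measurable (chordRadiusSq s r) := by
  unfold chordRadiusSq
  fun_prop

lemma chordRadiusSq_comm (s r : ℝ) {t : ℝ} (ht : t ≠ 0) :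
    chordRadiusSq s r t = chordRadiusSq r s t := by
  unfold chordRadiusSq
  field_simp
  ring

lemma chordRadiusSq_le_sq_right (s r t : ℝ) : chordRadiusSq s r t ≤ r ^ 2 :=
  sub_le_self _ (sq_nonneg _)

lemma chordRadiusSq_le_sq_left (s r : ℝ) {t : ℝ} (ht : t ≠ 0) : chordRadiusSq s r t ≤ s ^ 2 :=
  (chordRadiusSq_comm s r ht).trans_le (chordRadiusSq_le_sq_right r s t)

lemma chordRadiusSq_sub (s Q R : ℝ) {t : ℝ} (ht : t ≠ 0) :
    chordRadiusSq s Q t - chordRadiusSq s R t =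
      (Q ^ 2 - R ^ 2) * (t ^ 2 - ((R ^ 2 + Q ^ 2) / 2 - s ^ 2)) / (2 * t ^ 2) := by
  unfold chordRadiusSq
  field_simp
  ring

lemma chordRadiusSq_le_of_sq_le {s Q R t : ℝ} (hR : 0 ≤ R) (hRQ : R ≤ Q) (ht : t ≠ 0)
    (hts : t ^ 2 ≤ (R ^ 2 + Q ^ 2) / 2 - s ^ 2) : chordRadiusSq s Q t ≤ chordRadiusSq s R t := by
  have hsq : R ^ 2 ≤ Q ^ 2 := by gcongr
  rw [← sub_nonpos, chordRadiusSq_sub s Q R ht]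
  exact div_nonpos_of_nonpos_of_nonneg
    (mul_nonpos_of_nonneg_of_nonpos (sub_nonneg.2 hsq) (sub_nonpos.2 hts)) (by positivity)

lemma chordRadiusSq_le_of_le_sq {s Q R t : ℝ} (hR : 0 ≤ R) (hRQ : R ≤ Q) (ht : t ≠ 0)
    (hts : (R ^ 2 + Q ^ 2) / 2 - s ^ 2 ≤ t ^ 2) : chordRadiusSq s R t ≤ chordRadiusSq s Q t := by
  have hsq : R ^ 2 ≤ Q ^ 2 := by gcongr
  rw [← sub_nonneg, chordRadiusSq_sub s Q R ht]
  exact div_nonneg (mul_nonneg (sub_nonneg.2 hsq) (sub_nonneg.2 hts)) (by positivity)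

lemma chordRadiusSq_pos_iff {w g t : ℝ} (hw : 0 ≤ w) (hg : 0 ≤ g) (ht : 0 < t) :
    0 < chordRadiusSq w g t ↔ t ∈ Ioo |g - w| (g + w) := by
  have hupper : t ^ 2 + g ^ 2 - w ^ 2 < 2 * t * g ↔ |t - g| < w := by
    rw [← sq_lt_sq₀ (abs_nonneg _) hw, sq_abs]
    constructor <;> intro <;> linarith
  have hlower : -(2 * t * g) < t ^ 2 + g ^ 2 - w ^ 2 ↔ w < t + g := by
    rw [← sq_lt_sq₀ hw (by positivity)]
    constructor <;> intro <;> linarith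
  rw [chordRadiusSq, sub_pos, div_pow, div_lt_iff₀ (by positivity), mul_comm, ← mul_pow, sq_lt_sq,
    abs_of_nonneg (a := 2 * t * g) (by positivity), abs_lt, hupper, hlower, mem_Ioo, abs_lt, abs_lt]
  constructor
  · rintro ⟨hwtg, hlt, hgt⟩
    refine ⟨⟨?_, ?_⟩, ?_⟩ <;> linarith
  · rintro ⟨⟨hlt, hgt⟩, htgw⟩
    refine ⟨?_, ?_, ?_⟩ <;> linarith

lemma lt_chordRadiusSq_iff (s r q : ℝ) {t : ℝ} (ht : 0 < t) :
    q < chordRadiusSq s r t ↔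
      t ∈ Ioo |√(r ^ 2 - q) - √(s ^ 2 - q)| (√(r ^ 2 - q) + √(s ^ 2 - q)) := by
  rcases le_or_gt (r ^ 2) q with hr | hr
  · have hnot : ¬q < chordRadiusSq s r t := not_lt.2 ((chordRadiusSq_le_sq_right s r t).trans hr)
    rw [Real.sqrt_eq_zero_of_nonpos (sub_nonpos.2 hr), zero_sub, abs_neg,
      abs_of_nonneg (Real.sqrt_nonneg _), zero_add, Ioo_self]
    exact iff_of_false hnot (notMem_empty t)
  rcases le_or_gt (s ^ 2) q with hs | hs
  · have hnot : ¬q < chordRadiusSq s r t :=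
      not_lt.2 ((chordRadiusSq_le_sq_left s r ht.ne').trans hs)
    rw [Real.sqrt_eq_zero_of_nonpos (sub_nonpos.2 hs), sub_zero,
      abs_of_nonneg (Real.sqrt_nonneg _), add_zero, Ioo_self]
    exact iff_of_false hnot (notMem_empty t)
  rw [← chordRadiusSq_pos_iff (Real.sqrt_nonneg _) (Real.sqrt_nonneg _) ht, chordRadiusSq,
    chordRadiusSq, Real.sq_sqrt (sub_nonneg.2 hr.le), Real.sq_sqrt (sub_nonneg.2 hs.le),
    ← add_sub_assoc, sub_sub_sub_cancel_right, lt_sub_comm, sub_pos]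

-- Both sides have length `min (min (2 * g) (2 * w)) (g + w - c)`.
lemma volume_ball_inter_ball_zero_eq_Ioi_inter_Ioo {c : ℝ} (hc : 0 ≤ c) (g w : ℝ) :
    volume (ball c w ∩ ball 0 g) = volume (Ioi c ∩ Ioo |g - w| (g + w)) := by
  have hlength : min (c + w) (0 + g) - max (c - w) (0 - g) = g + w - max c |g - w| := by
    grind
  rw [Real.ball_eq_Ioo, Real.ball_eq_Ioo, Ioo_inter_Ioo, inter_comm (Ioi c), Ioo_inter_Ioi,
    Real.volume_Ioo, Real.volume_Ioo, sup_comm |g - w| c]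
  exact congrArg ENNReal.ofReal hlength

section Annulus

variable {F : Type*} [NormedAddCommGroup F]

/-- The closed annulus about the origin with inner radius `R` and outer radius `Q`. -/
def annulus (F : Type*) [NormedAddCommGroup F] (R Q : ℝ) : Set F :=
  {p | R ≤ ‖p‖ ∧ ‖p‖ ≤ Q}

lemma annulus_eq_closedBall_sdiff_ball (R Q : ℝ) : annulus F R Q = closedBall 0 Q \ ball 0 R := by
  ext p
  simp [annulus, and_comm]

variable [MeasurableSpace F] [BorelSpace F]

lemma measurableSet_annulus (R Q : ℝ) : MeasurableSet (annulus F R Q) := by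
  rw [annulus_eq_closedBall_sdiff_ball]
  exact measurableSet_closedBall.diff measurableSet_ball

lemma measureReal_withDensity_annulus (μ : Measure F) (k : ℝ≥0) (R Q : ℝ) {S : Set F}
    (hS : MeasurableSet S) :
    (μ.withDensity fun p => if R ≤ ‖p‖ ∧ ‖p‖ ≤ Q then (k : ENNReal) else 0).real S =
      k * μ.real (S ∩ annulus F R Q) := by
  have hdensity : (fun p : F => if R ≤ ‖p‖ ∧ ‖p‖ ≤ Q then (k : ENNReal) else 0) =
      (annulus F R Q).indicator fun _ => (k : ENNReal) := by
    ext p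
    simp only [indicator, annulus, mem_ofPred_eq]
    congr
  rw [hdensity, withDensity_indicator (measurableSet_annulus R Q), withDensity_const,
    measureReal_ennreal_smul_apply, measureReal_restrict_apply hS, ENNReal.coe_toReal]

variable [NormedSpace ℝ F] [FiniteDimensional ℝ F] [Nontrivial F]

lemma measureReal_inter_annulus (μ : Measure F) [μ.IsAddHaarMeasure] {S : Set F}
    (hS : MeasurableSet S) (hμS : μ S ≠ ⊤) {R Q : ℝ} (hRQ : R ≤ Q) :
    μ.real (S ∩ annulus F R Q) = μ.real (S ∩ ball 0 Q) - μ.real (S ∩ ball 0 R) := by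
  have hball : closedBall (0 : F) Q =ᵐ[μ] ball 0 Q := by
    rw [← closedBall_sdiff_sphere]
    exact (sdiff_null_ae_eq_self (Measure.addHaar_sphere μ 0 Q)).symm
  have hannulus : (S ∩ annulus F R Q : Set F) =ᵐ[μ] ((S ∩ ball 0 Q) \ (S ∩ ball 0 R) : Set F) := by
    rw [annulus_eq_closedBall_sdiff_ball, inter_sdiff_distrib_left]
    exact (Filter.EventuallyEq.rfl.inter hball).diff Filter.EventuallyEq.rfl
  rw [measureReal_congr hannulus,
    measureReal_sdiff (inter_subset_inter_right _ (ball_subset_ball hRQ))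
      (hS.inter measurableSet_ball) (measure_ne_top_of_subset inter_subset_left hμS)]

end Annulus

variable {E : Type*} [NormedAddCommGroup E] [InnerProductSpace ℝ E] {e : E}

/-- The chord region over a set `I` of distances: for `t ∈ I`, its slice orthogonal to the unit
vector `e` at height `t` is a ball of squared radius `chordRadiusSq s r t`. -/
def chordRegion (e : E) (s r : ℝ) (I : Set ℝ) : Set E :=
  {p | ⟪e, p⟫ ∈ I ∧ ‖p‖ ^ 2 - ⟪e, p⟫ ^ 2 < chordRadiusSq s r ⟪e, p⟫}

lemma chordRegion_mono {s r r' : ℝ} {I : Set ℝ}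
    (h : ∀ t ∈ I, chordRadiusSq s r t ≤ chordRadiusSq s r' t) :
    chordRegion e s r I ⊆ chordRegion e s r' I :=
  fun _ hp => ⟨hp.1, hp.2.trans_le (h _ hp.1)⟩

lemma chordRegion_union (s r : ℝ) (I J : Set ℝ) :
    chordRegion e s r (I ∪ J) = chordRegion e s r I ∪ chordRegion e s r J :=
  ext fun _ => or_and_right

lemma disjoint_chordRegion {I J : Set ℝ} (hIJ : Disjoint I J) (s r : ℝ) :
    Disjoint (chordRegion e s r I) (chordRegion e s r J) :=
  (hIJ.preimage (fun p => ⟪e, p⟫)).mono (fun _ hp => hp.1) (fun _ hp => hp.1)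

lemma norm_smul_add_sq (he : ‖e‖ = 1) {y : E} (hy : ⟪e, y⟫ = 0) (t : ℝ) :
    ‖t • e + y‖ ^ 2 = t ^ 2 + ‖y‖ ^ 2 := by
  rw [norm_add_sq_real, norm_smul, real_inner_smul_left, hy, he, Real.norm_eq_abs, mul_one, sq_abs,
    mul_zero, mul_zero, add_zero]

lemma smul_add_mem_ball_iff (he : ‖e‖ = 1) {y : E} (hy : ⟪e, y⟫ = 0) (c t : ℝ) {s : ℝ}
    (hs : 0 ≤ s) : t • e + y ∈ ball (c • e) s ↔ t ∈ ball c √(s ^ 2 - ‖y‖ ^ 2) := by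
  rw [mem_ball, mem_ball, dist_eq_norm, Real.dist_eq, Real.lt_sqrt (abs_nonneg _), sq_abs,
    ← sq_lt_sq₀ (norm_nonneg _) hs, add_sub_right_comm, ← sub_smul, norm_smul_add_sq he hy,
    lt_sub_iff_add_lt]

lemma smul_add_mem_chordRegion_iff (he : ‖e‖ = 1) {y : E} (hy : ⟪e, y⟫ = 0) (s r t : ℝ)
    (I : Set ℝ) :
    t • e + y ∈ chordRegion e s r I ↔ t ∈ I ∧ ‖y‖ ^ 2 < chordRadiusSq s r t := by
  have hinner : ⟪e, t • e + y⟫ = t := by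
    rw [inner_add_right, real_inner_smul_right, hy, real_inner_self_eq_norm_sq, he, one_pow,
      mul_one, add_zero]
  rw [chordRegion, mem_ofPred_eq, hinner, norm_smul_add_sq he hy, add_sub_cancel_left]

variable [MeasurableSpace E] [BorelSpace E]

lemma measurableSet_chordRegion (s r : ℝ) {I : Set ℝ} (hI : MeasurableSet I) :
    MeasurableSet (chordRegion e s r I) := by
  have hinner : Measurable fun p : E => ⟪e, p⟫ := (innerSL ℝ e).continuous.measurable
  exact (hinner hI).inter (measurableSet_lt ((measurable_norm.pow_const 2).sub (hinner.pow_const 2))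
    ((measurable_chordRadiusSq s r).comp hinner))

variable [FiniteDimensional ℝ E]

lemma measurePreserving_smul_add (he : ‖e‖ = 1) :
    MeasurePreserving (fun p : ℝ × (ℝ ∙ e)ᗮ => p.1 • e + (p.2 : E)) := by
  have hcoord := (LinearIsometryEquiv.toSpanUnitSingleton (𝕜 := ℝ) e he).measurePreserving.prod
    (MeasurePreserving.id (volume : Measure (ℝ ∙ e)ᗮ))
  have hsplit := (ℝ ∙ e).orthogonalDecomposition.symm.measurePreserving.comp
    (WithLp.volume_preserving_toLp (ℝ ∙ e) (ℝ ∙ e)ᗮ)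
  exact hsplit.comp hcoord

lemma volume_eq_lintegral_lines (he : ‖e‖ = 1) {S : Set E} (hS : MeasurableSet S) :
    volume S = ∫⁻ y : (ℝ ∙ e)ᗮ, volume {t : ℝ | t • e + (y : E) ∈ S} := by
  have hadd := measurePreserving_smul_add he
  rw [← hadd.measure_preimage hS.nullMeasurableSet, Measure.volume_eq_prod,
    Measure.prod_apply_symm (hadd.measurable hS)]
  rfl

theorem volume_ball_inter_ball_eq_chordRegion (he : ‖e‖ = 1) {s r c : ℝ} (hs : 0 ≤ s) (hr : 0 ≤ r)
    (hc : 0 ≤ c) :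
    volume (ball (c • e) s ∩ ball 0 r) = volume (chordRegion e s r (Ioi c)) := by
  rw [volume_eq_lintegral_lines he (measurableSet_ball.inter measurableSet_ball),
    volume_eq_lintegral_lines he (measurableSet_chordRegion s r measurableSet_Ioi)]
  refine lintegral_congr fun y => ?_
  have hy : ⟪e, (y : E)⟫ = 0 := Submodule.mem_orthogonal_singleton_iff_inner_right.1 y.2
  have hlens : {t : ℝ | t • e + (y : E) ∈ ball (c • e) s ∩ ball 0 r} =
      ball c √(s ^ 2 - ‖(y : E)‖ ^ 2) ∩ ball 0 √(r ^ 2 - ‖(y : E)‖ ^ 2) := by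
    ext t
    rw [mem_ofPred_eq, mem_inter_iff, smul_add_mem_ball_iff he hy c t hs, ← zero_smul ℝ e,
      smul_add_mem_ball_iff he hy 0 t hr, mem_inter_iff]
  have hchord : {t : ℝ | t • e + (y : E) ∈ chordRegion e s r (Ioi c)} =
      Ioi c ∩ Ioo |√(r ^ 2 - ‖(y : E)‖ ^ 2) - √(s ^ 2 - ‖(y : E)‖ ^ 2)|
        (√(r ^ 2 - ‖(y : E)‖ ^ 2) + √(s ^ 2 - ‖(y : E)‖ ^ 2)) := by
    ext t
    rw [mem_ofPred_eq, smul_add_mem_chordRegion_iff he hy, mem_inter_iff]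
    exact and_congr_right fun ht => lt_chordRadiusSq_iff s r _ (hc.trans_lt ht)
  rw [hlens, hchord, volume_ball_inter_ball_zero_eq_Ioi_inter_Ioo hc]

lemma volume_chordRegion_ne_top (he : ‖e‖ = 1) {s r : ℝ} (hs : 0 ≤ s) (hr : 0 ≤ r) {I : Set ℝ}
    (hI : I ⊆ Ioi 0) : volume (chordRegion e s r I) ≠ ⊤ := by
  have hfinite : volume (chordRegion e s r (Ioi 0)) ≠ ⊤ := by
    rw [← volume_ball_inter_ball_eq_chordRegion he hs hr le_rfl]
    exact measure_ne_top_of_subset inter_subset_left measure_ball_lt_top.ne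
  exact measure_ne_top_of_subset (fun _ => And.imp_left (@hI _)) hfinite

theorem volume_real_ball_inter_ball_sub (he : ‖e‖ = 1) {s r a c : ℝ} (hs : 0 ≤ s) (hr : 0 ≤ r)
    (ha : 0 ≤ a) (hac : a ≤ c) :
    volume.real (ball (a • e) s ∩ ball 0 r) - volume.real (ball (c • e) s ∩ ball 0 r) =
      volume.real (chordRegion e s r (Ioc a c)) := by
  have hIoc : Ioc a c ⊆ Ioi 0 := fun _ ht => ha.trans_lt ht.1
  have hIoi : Ioi c ⊆ Ioi 0 := Ioi_subset_Ioi (ha.trans hac)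
  have hlens (b : ℝ) (hb : 0 ≤ b) : volume.real (ball (b • e) s ∩ ball 0 r) =
      volume.real (chordRegion e s r (Ioi b)) :=
    congrArg ENNReal.toReal (volume_ball_inter_ball_eq_chordRegion he hs hr hb)
  rw [hlens a ha, hlens c (ha.trans hac), ← Ioc_union_Ioi_eq_Ioi hac, chordRegion_union,
    measureReal_union (disjoint_chordRegion Ioc_disjoint_Ioi_same s r)
    (measurableSet_chordRegion s r measurableSet_Ioi) (volume_chordRegion_ne_top he hs hr hIoc)
    (volume_chordRegion_ne_top he hs hr hIoi), add_sub_cancel_right]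

theorem volume_real_ball_inter_annulus_sub (he : ‖e‖ = 1) {s R Q a c : ℝ} (hs : 0 ≤ s)
    (hR : 0 ≤ R) (hRQ : R ≤ Q) (ha : 0 ≤ a) (hac : a ≤ c) :
    volume.real (ball (a • e) s ∩ annulus E R Q) - volume.real (ball (c • e) s ∩ annulus E R Q) =
      volume.real (chordRegion e s Q (Ioc a c)) - volume.real (chordRegion e s R (Ioc a c)) := by
  have : Nontrivial E := ⟨e, 0, norm_ne_zero_iff.1 (he ▸ one_ne_zero)⟩
  rw [measureReal_inter_annulus _ measurableSet_ball measure_ball_lt_top.ne hRQ,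
    measureReal_inter_annulus _ measurableSet_ball measure_ball_lt_top.ne hRQ,
    ← volume_real_ball_inter_ball_sub he hs (hR.trans hRQ) ha hac,
    ← volume_real_ball_inter_ball_sub he hs hR ha hac]
  ring

theorem monotoneOn_volume_real_ball_inter_annulus (he : ‖e‖ = 1) {s R Q : ℝ} (hs : 0 ≤ s)
    (hR : 0 ≤ R) (hRQ : R ≤ Q) :
    MonotoneOn (fun c : ℝ => volume.real (ball (c • e) s ∩ annulus E R Q))
      (Icc 0 √((R ^ 2 + Q ^ 2) / 2 - s ^ 2)) := by
  intro a ha c hc hac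
  have hchord : chordRegion e s Q (Ioc a c) ⊆ chordRegion e s R (Ioc a c) := by
    refine chordRegion_mono fun t ht => ?_
    have ht0 : 0 < t := ha.1.trans_lt ht.1
    exact chordRadiusSq_le_of_sq_le hR hRQ ht0.ne' ((Real.le_sqrt' ht0).1 (ht.2.trans hc.2))
  have hvolume := measureReal_mono hchord
    (volume_chordRegion_ne_top he hs hR fun _ ht => ha.1.trans_lt ht.1)
  exact sub_nonpos.1 ((volume_real_ball_inter_annulus_sub he hs hR hRQ ha.1 hac).trans_le
    (sub_nonpos.2 hvolume))

theorem antitoneOn_volume_real_ball_inter_annulus (he : ‖e‖ = 1) {s R Q : ℝ} (hs : 0 ≤ s)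
    (hR : 0 ≤ R) (hRQ : R ≤ Q) :
    AntitoneOn (fun c : ℝ => volume.real (ball (c • e) s ∩ annulus E R Q))
      (Ici √((R ^ 2 + Q ^ 2) / 2 - s ^ 2)) := by
  intro a ha c _ hac
  have ha0 : 0 ≤ a := (Real.sqrt_nonneg _).trans ha
  have hchord : chordRegion e s R (Ioc a c) ⊆ chordRegion e s Q (Ioc a c) := by
    refine chordRegion_mono fun t ht => ?_
    have ht0 : 0 < t := ha0.trans_lt ht.1
    exact chordRadiusSq_le_of_le_sq hR hRQ ht0.ne' (Real.sqrt_le_iff.1 (ha.trans ht.1.le)).2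
  have hvolume := measureReal_mono hchord
    (volume_chordRegion_ne_top he hs (hR.trans hRQ) fun _ ht => ha0.trans_lt ht.1)
  exact sub_nonneg.1 ((sub_nonneg.2 hvolume).trans_eq
    (volume_real_ball_inter_annulus_sub he hs hR hRQ ha0 hac).symm)

theorem annulus_nu_unimodal_general (he : ‖e‖ = 1) {R Q : ℝ} (hR : 0 ≤ R) (hRQ : R ≤ Q) (k : ℝ≥0)
    {s : ℝ} (hs : 0 ≤ s) {μ₀ : Measure E}
    (hμ₀ : μ₀ = volume.withDensity fun p => if R ≤ ‖p‖ ∧ ‖p‖ ≤ Q then (k : ENNReal) else 0)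
    {ν : ℝ → ℝ} (hν : ∀ c, ν c = μ₀.real (ball (c • e) s)) :
    ∃ ω ∈ Icc R Q, MonotoneOn ν (Icc R ω) ∧ AntitoneOn ν (Icc ω Q) := by
  obtain rfl : ν = fun c => k * volume.real (ball (c • e) s ∩ annulus E R Q) := by
    ext c
    rw [hν, hμ₀, measureReal_withDensity_annulus _ _ _ _ measurableSet_ball]
  set m := √((R ^ 2 + Q ^ 2) / 2 - s ^ 2)
  have hsq : R ^ 2 ≤ Q ^ 2 := by gcongr
  have hmQ : m ≤ Q := (Real.sqrt_le_left (hR.trans hRQ)).2 (by linarith [sq_nonneg s])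
  refine ⟨max R m, ⟨le_max_left R m, max_le hRQ hmQ⟩, ?_, ?_⟩
  · rcases le_total m R with hmR | hRm
    · rw [max_eq_left hmR, Icc_self]
      exact subsingleton_singleton.monotoneOn _
    · rw [max_eq_right hRm]
      exact (monotone_mul_left_of_nonneg k.2).comp_monotoneOn
        ((monotoneOn_volume_real_ball_inter_annulus he hs hR hRQ).mono (Icc_subset_Icc_left hR))
  · have hIcc : Icc (max R m) Q ⊆ Ici m := fun c hc => (le_max_right R m).trans hc.1
    exact (monotone_mul_left_of_nonneg k.2).comp_antitoneOn
      ((antitoneOn_volume_real_ball_inter_annulus he hs hR hRQ).mono hIcc)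

lemma pc_eq_smul_single (c : ℝ) : pc c = c • EuclideanSpace.single 0 1 := by
  ext i
  fin_cases i <;> simp [pc]

/-- For the uniform probability measure `μ₀` on the annulus
`{p | R ≤ ‖p‖ ≤ Q}` and any `s > 0`, the function `ν̃_s(c) = μ₀(B((c,0),s))` is unimodal on
`[R,Q]`: there is `ω ∈ [R,Q]` such that `ν̃_s` is non-decreasing on `[R,ω]` and non-increasing
on `[ω,Q]`. -/
theorem annulus_nu_unimodal
    (R Q : ℝ) (hR : 0 < R) (hRQ : R < Q)
    (μ₀ : Measure (EuclideanSpace ℝ (Fin 2)))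
    (hμ₀ : μ₀ = volume.withDensity (fun p =>
      if R ≤ ‖p‖ ∧ ‖p‖ ≤ Q then ENNReal.ofReal (1 / (Real.pi * (Q ^ 2 - R ^ 2))) else 0))
    (s : ℝ) (hs : 0 < s)
    (ν : ℝ → ℝ) (hν : ∀ c, ν c = (μ₀ (ball (pc c) s)).toReal) :
    ∃ ω ∈ Icc R Q, MonotoneOn ν (Icc R ω) ∧ AntitoneOn ν (Icc ω Q) :=
  annulus_nu_unimodal_general (e := EuclideanSpace.single 0 1) (by simp) hR.le hRQ.le _ hs.le hμ₀
    fun c => pc_eq_smul_single c ▸ hν c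
end
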